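/- arXiv:2605.13999 — 7 statements merged into one kernel-verified Lean document; each statement's English description precedes it below -/
import Mathlib

section
/- Small-noise expansion of the uniform-corrupted marginal (Lemma B.1). For every x ∈ X there exist constants C > 0 and σ₀ ∈ (0,1) such that for all σ ∈ (0,σ₀): |q_σ(x) − p_data(proj_D(x)) · (σ/K)^{d(x,D)}| ≤ C · (σ/K)^{d(x,D)+1}. -/
open scoped Classical

/-- Uniform-corrupted marginal `q_σ(x) = Σ_{x0} p(x0) ∏_i ((1−σ)1{x^i=x0^i} + σ/K)`. -/
noncomputable def qUnif (K H : ℕ) (p : (Fin H → Fin K) → ℝ) (σ : ℝ)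
    (x : Fin H → Fin K) : ℝ :=
  ∑ x0 : Fin H → Fin K, p x0 *
    ∏ i : Fin H, ((1 - σ) * (if x i = x0 i then (1 : ℝ) else 0) + σ / K)

/-- Hamming distance from `x` to the support `D = {z : p z ≠ 0}` of `p`. -/
noncomputable def distSupp (K H : ℕ) (p : (Fin H → Fin K) → ℝ)
    (x : Fin H → Fin K) : ℕ :=
  sInf {n : ℕ | ∃ z : Fin H → Fin K, p z ≠ 0 ∧ hammingDist x z = n}

/-- Total `p`-mass of the set `proj_D(x)` of nearest in-support strings to `x`. -/
noncomputable def projMass (K H : ℕ) (p : (Fin H → Fin K) → ℝ)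
    (x : Fin H → Fin K) : ℝ :=
  ∑ z ∈ Finset.univ.filter
      (fun z : Fin H → Fin K => p z ≠ 0 ∧ hammingDist x z = distSupp K H p x), p z

/-- Lemma B.1: small-noise expansion of the uniform-corrupted marginal:
`|q_σ(x) − p(proj_D(x)) (σ/K)^{d(x,D)}| ≤ C (σ/K)^{d(x,D)+1}` for small `σ`. -/
theorem uniform_marginal_small_noise_expansion
    (K H : ℕ) (hK : 2 ≤ K) (hH : 1 ≤ H)
    (p : (Fin H → Fin K) → ℝ) (hp0 : ∀ v, 0 ≤ p v) (hp1 : ∑ v, p v = 1)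
    (x : Fin H → Fin K) :
    ∃ C > (0 : ℝ), ∃ σ₀ ∈ Set.Ioo (0 : ℝ) 1, ∀ σ ∈ Set.Ioo (0 : ℝ) σ₀,
      |qUnif K H p σ x - projMass K H p x * (σ / K) ^ (distSupp K H p x)|
        ≤ C * (σ / K) ^ (distSupp K H p x + 1) := by
  have hKpos : (0:ℝ) < K := by
    have : 0 < K := by omega
    exact_mod_cast this
  have hC : (0:ℝ) < (H:ℝ) * K + 1 := by positivity
  refine ⟨(H:ℝ) * K + 1, hC, 1/2, by norm_num, ?_⟩
  rintro σ ⟨hσ0, hσ1⟩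
  obtain ⟨t, ht⟩ : ∃ t : ℝ, t = σ / K := ⟨_, rfl⟩
  have ht0 : 0 < t := by rw [ht]; positivity
  have hσt : σ = K * t := by rw [ht]; field_simp
  have hK2 : (2:ℝ) ≤ K := by exact_mod_cast hK
  have htσ : t ≤ σ := by nlinarith
  have ht1 : t ≤ 1 := by linarith
  have hn : ∀ z, p z ≠ 0 → distSupp K H p x ≤ hammingDist x z := fun z hz =>
    Nat.sInf_le ⟨z, hz, rfl⟩
  unfold qUnif projMass
  rw [← ht]
  generalize distSupp K H p x = n at *
  rw [Finset.sum_filter, Finset.sum_mul, ← Finset.sum_sub_distrib]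
  refine (Finset.abs_sum_le_sum_abs _ _).trans ?_
  have key : ∀ z, |p z * ∏ i : Fin H, ((1 - σ) * (if x i = z i then (1 : ℝ) else 0) + t)
      - (if p z ≠ 0 ∧ hammingDist x z = n then p z else 0) * t ^ n|
      ≤ p z * (((H:ℝ) * K + 1) * t ^ (n+1)) := by
    intro z
    by_cases hz : p z = 0
    · simp [hz]
    have hd := hn z hz
    obtain ⟨m, hm, hprod⟩ : ∃ m : ℕ, m ≤ H ∧
        ∏ i : Fin H, ((1 - σ) * (if x i = z i then (1 : ℝ) else 0) + t)
          = (1 - σ + t) ^ m * t ^ (hammingDist x z) := by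
      refine ⟨(Finset.univ.filter (fun i => x i = z i)).card, ?_, ?_⟩
      · exact (Finset.card_le_univ _).trans (by simp)
      · have : ∀ i : Fin H, ((1 - σ) * (if x i = z i then (1 : ℝ) else 0) + t)
            = if x i = z i then (1 - σ + t) else t := by
          intro i; split_ifs <;> ring
        rw [Finset.prod_congr rfl (fun i _ => this i), Finset.prod_ite, Finset.prod_const,
          Finset.prod_const]
        congr 2
    rw [hprod]
    have ha0 : 0 ≤ 1 - σ + t := by linarith
    have ha1 : (1 - σ + t) ^ m ≤ 1 := pow_le_one₀ ha0 (by linarith)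
    have hap : 0 ≤ (1 - σ + t) ^ m := pow_nonneg ha0 m
    by_cases hdn : hammingDist x z = n
    · rw [if_pos ⟨hz, hdn⟩, hdn]
      have hb := one_add_mul_le_pow (a := -(σ - t)) (by linarith) m
      have e : 1 + -(σ - t) = 1 - σ + t := by ring
      rw [e] at hb
      have hmH : (m:ℝ) ≤ H := by exact_mod_cast hm
      have h1 : (m:ℝ) * (σ - t) ≤ H * (K * t) := by
        apply mul_le_mul hmH (by linarith) (by linarith) (by positivity)
      have h2 : 1 - (1 - σ + t) ^ m ≤ ((H:ℝ) * K + 1) * t := by nlinarith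
      have e2 : p z * ((1 - σ + t) ^ m * t ^ n) - p z * t ^ n
          = -(p z * ((1 - (1 - σ + t) ^ m) * t ^ n)) := by ring
      rw [e2, abs_neg, abs_of_nonneg (mul_nonneg (hp0 z) (mul_nonneg (by linarith) (by positivity)))]
      refine mul_le_mul_of_nonneg_left ?_ (hp0 z)
      calc _ ≤ (((H:ℝ) * K + 1) * t) * t ^ n := mul_le_mul_of_nonneg_right h2 (by positivity)
        _ = _ := by ring
    · rw [if_neg (fun h => hdn h.2), zero_mul, sub_zero,
        abs_of_nonneg (mul_nonneg (hp0 z) (mul_nonneg hap (by positivity)))]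
      refine mul_le_mul_of_nonneg_left ?_ (hp0 z)
      refine mul_le_mul ?_ (pow_le_pow_of_le_one ht0.le ht1 (by omega)) (by positivity) hC.le
      have : 0 ≤ (H:ℝ) * K := by positivity
      linarith
  refine (Finset.sum_le_sum (fun z _ => key z)).trans ?_
  rw [← Finset.sum_mul, hp1, one_mul]
end

section
/- Small-noise expansion of the absorbing-corrupted marginal (Lemma B.2). Fix x ∈ X̄. If x is compatible with D, then d(x,D) equals the number of masked coordinates of x, and there exist constants C > 0 and σ₀ ∈ (0,1) such that for all σ ∈ (0,σ₀): |q̄_σ(x) − p_data(proj_D(x)) · σ^{d(x,D)}| ≤ C · σ^{d(x,D)+1}. If x is not compatible with D, then q̄_σ(x) = 0 for every σ ∈ [0,1]. -/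
open scoped Classical

/-- Absorbing-corrupted marginal `q̄_σ(x) = Σ_{x0 ∈ D} p(x0) ∏_i ((1−σ)1{x^i=x0^i} + σ1{x^i=m})`,
where the mask is `none : Option (Fin K)` and `p` is a distribution on clean strings
(summing over all clean strings is the same as summing over `D = supp p` since
off-support terms vanish). -/
noncomputable def qAbs (K H : ℕ) (p : (Fin H → Fin K) → ℝ) (σ : ℝ)
    (x : Fin H → Option (Fin K)) : ℝ :=
  ∑ x0 : Fin H → Fin K, p x0 *
    ∏ i : Fin H, ((1 - σ) * (if x i = some (x0 i) then (1 : ℝ) else 0)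
      + σ * (if x i = none then (1 : ℝ) else 0))

/-- Hamming distance from `x ∈ X̄` to the (embedded) support `D` of `p`. -/
noncomputable def distSuppAbs (K H : ℕ) (p : (Fin H → Fin K) → ℝ)
    (x : Fin H → Option (Fin K)) : ℕ :=
  sInf {n : ℕ | ∃ z : Fin H → Fin K, p z ≠ 0 ∧
    hammingDist x (fun i => (some (z i) : Option (Fin K))) = n}

/-- Total `p`-mass of the nearest in-support strings to `x ∈ X̄`. -/
noncomputable def projMassAbs (K H : ℕ) (p : (Fin H → Fin K) → ℝ)
    (x : Fin H → Option (Fin K)) : ℝ :=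
  ∑ z ∈ Finset.univ.filter
      (fun z : Fin H → Fin K => p z ≠ 0 ∧
        hammingDist x (fun i => (some (z i) : Option (Fin K))) = distSuppAbs K H p x), p z

/-- `x ∈ X̄` is compatible with `D` if some `x0 ∈ D` agrees with `x` on all unmasked
coordinates. -/
def CompatAbs (K H : ℕ) (p : (Fin H → Fin K) → ℝ)
    (x : Fin H → Option (Fin K)) : Prop :=
  ∃ x0 : Fin H → Fin K, p x0 ≠ 0 ∧ ∀ i : Fin H, x i ≠ none → x i = some (x0 i)

theorem aux_hd (K H : ℕ) (x : Fin H → Option (Fin K)) (z : Fin H → Fin K) :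
    (Finset.univ.filter (fun i : Fin H => x i = none)).card
      ≤ hammingDist x (fun i => (some (z i) : Option (Fin K))) := by
  unfold hammingDist
  apply Finset.card_le_card
  intro i hi
  simp only [Finset.mem_filter, Finset.mem_univ, true_and] at hi ⊢
  simp [hi]

theorem aux_hd_eq (K H : ℕ) (x : Fin H → Option (Fin K)) (z : Fin H → Fin K) :
    hammingDist x (fun i => (some (z i) : Option (Fin K))) =
      (Finset.univ.filter (fun i : Fin H => x i = none)).card
      ↔ ∀ i : Fin H, x i ≠ none → x i = some (z i) := by
  have hsub : Finset.univ.filter (fun i : Fin H => x i = none) ⊆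
      Finset.univ.filter (fun i : Fin H => x i ≠ some (z i)) := by
    intro i hi
    simp only [Finset.mem_filter, Finset.mem_univ, true_and] at hi ⊢
    simp [hi]
  constructor
  · intro h i hi
    by_contra hne
    have heq := Finset.eq_of_subset_of_card_le hsub
      (by unfold hammingDist at h; exact h.le)
    have hm : i ∈ Finset.univ.filter (fun i : Fin H => x i ≠ some (z i)) := by
      simpa using hne
    rw [← heq] at hm
    exact hi (by simpa using hm)
  · intro h
    unfold hammingDist
    congr 1
    ext i
    simp only [Finset.mem_filter, Finset.mem_univ, true_and]
    constructor
    · intro hne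
      by_contra hn
      exact hne (h i hn)
    · intro hn
      simp [hn]

theorem aux_prod (K H : ℕ) (x : Fin H → Option (Fin K)) (z : Fin H → Fin K) (σ : ℝ) :
    ∏ i : Fin H, ((1 - σ) * (if x i = some (z i) then (1 : ℝ) else 0)
      + σ * (if x i = none then (1 : ℝ) else 0)) =
    if (∀ i : Fin H, x i ≠ none → x i = some (z i)) then
      σ ^ (Finset.univ.filter (fun i : Fin H => x i = none)).card *
        (1 - σ) ^ (Finset.univ.filter (fun i : Fin H => ¬ x i = none)).card
    else 0 := by
  split_ifs with h
  · rw [← Finset.prod_filter_mul_prod_filter_not Finset.univ (fun i : Fin H => x i = none)]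
    congr 1
    · apply Finset.prod_eq_pow_card
      intro i hi
      simp only [Finset.mem_filter, Finset.mem_univ, true_and] at hi
      simp [hi]
    · apply Finset.prod_eq_pow_card
      intro i hi
      simp only [Finset.mem_filter, Finset.mem_univ, true_and] at hi
      rw [if_pos (h i hi), if_neg hi]
      ring
  · push Not at h
    obtain ⟨i, hi, hne⟩ := h
    apply Finset.prod_eq_zero (Finset.mem_univ i)
    rw [if_neg hne, if_neg hi]
    ring

theorem absorbing_marginal_small_noise_expansion
    (K H : ℕ) (hK : 2 ≤ K) (hH : 1 ≤ H)
    (p : (Fin H → Fin K) → ℝ) (hp0 : ∀ v, 0 ≤ p v) (hp1 : ∑ v, p v = 1)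
    (x : Fin H → Option (Fin K)) :
    (CompatAbs K H p x →
      distSuppAbs K H p x = (Finset.univ.filter (fun i : Fin H => x i = none)).card ∧
      ∃ C > (0 : ℝ), ∃ σ₀ ∈ Set.Ioo (0 : ℝ) 1, ∀ σ ∈ Set.Ioo (0 : ℝ) σ₀,
        |qAbs K H p σ x - projMassAbs K H p x * σ ^ (distSuppAbs K H p x)|
          ≤ C * σ ^ (distSuppAbs K H p x + 1)) ∧
    (¬ CompatAbs K H p x → ∀ σ ∈ Set.Icc (0 : ℝ) 1, qAbs K H p σ x = 0) := by
  constructor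
  · rintro ⟨x0, hx0, hc⟩
    have hd : distSuppAbs K H p x =
        (Finset.univ.filter (fun i : Fin H => x i = none)).card := by
      unfold distSuppAbs
      apply le_antisymm
      · exact Nat.sInf_le ⟨x0, hx0, (aux_hd_eq K H x x0).2 hc⟩
      · apply le_csInf
        · exact ⟨_, x0, hx0, rfl⟩
        · rintro n ⟨z, _, rfl⟩
          exact aux_hd K H x z
    refine ⟨hd, ?_⟩
    have hP0 : 0 ≤ projMassAbs K H p x := Finset.sum_nonneg (fun v _ => hp0 v)
    have hq : ∀ σ : ℝ, qAbs K H p σ x = projMassAbs K H p x *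
        (σ ^ (Finset.univ.filter (fun i : Fin H => x i = none)).card *
        (1 - σ) ^ (Finset.univ.filter (fun i : Fin H => ¬ x i = none)).card) := by
      intro σ
      unfold qAbs projMassAbs
      rw [hd, Finset.sum_mul, Finset.sum_filter]
      apply Finset.sum_congr rfl
      intro z _
      rw [aux_prod]
      by_cases hz : p z = 0
      · simp [hz]
      · by_cases ha : ∀ i : Fin H, x i ≠ none → x i = some (z i)
        · rw [if_pos ha, if_pos ⟨hz, (aux_hd_eq K H x z).2 ha⟩]
        · rw [if_neg ha, if_neg (fun h => ha ((aux_hd_eq K H x z).1 h.2)), mul_zero]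
    rw [hd]
    generalize projMassAbs K H p x = P at *
    generalize (Finset.univ.filter (fun i : Fin H => x i = none)).card = M at *
    generalize (Finset.univ.filter (fun i : Fin H => ¬ x i = none)).card = n at *
    refine ⟨P * n + 1, by positivity, 1 / 2, by norm_num, ?_⟩
    rintro σ ⟨h0, h1⟩
    rw [hq σ]
    have hb : 1 - n * σ ≤ (1 - σ) ^ n := by
      have := one_add_mul_le_pow (a := -σ) (by linarith) n
      have e : (1 + -σ) = 1 - σ := by ring
      rw [e] at this
      linarith
    have hu : (1 - σ) ^ n ≤ 1 := pow_le_one₀ (by linarith) (by linarith)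
    have hs : 0 < σ ^ M := by positivity
    have e : P * (σ ^ M * (1 - σ) ^ n) - P * σ ^ M = -((P * σ ^ M) * (1 - (1 - σ) ^ n)) := by
      ring
    have hPs : 0 ≤ P * σ ^ M := by positivity
    rw [e, abs_neg, abs_of_nonneg (mul_nonneg hPs (by linarith))]
    calc P * σ ^ M * (1 - (1 - σ) ^ n) ≤ P * σ ^ M * (n * σ) :=
          mul_le_mul_of_nonneg_left (by linarith) hPs
      _ ≤ P * σ ^ M * (n * σ) + σ ^ (M + 1) := by
          have : 0 < σ ^ (M + 1) := by positivity
          linarith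
      _ = (P * n + 1) * σ ^ (M + 1) := by ring
  · intro hc σ _
    unfold qAbs
    apply Finset.sum_eq_zero
    intro z _
    rw [aux_prod]
    by_cases hz : p z = 0
    · simp [hz]
    · rw [if_neg (fun h => hc ⟨z, hz, h⟩), mul_zero]
end

section
/- Small-noise expansion of the concrete score ratio. For all x, y ∈ X there exist constants C > 0 and σ₀ ∈ (0,1) such that for all σ ∈ (0,σ₀): |(q_σ(y)/q_σ(x)) · (σ/K)^{d(x,D) − d(y,D)} − p_data(proj_D(y))/p_data(proj_D(x))| ≤ C·σ. Equivalently, q_σ(y)/q_σ(x) = (p_data(proj_D(y))/p_data(proj_D(x))) · (σ/K)^{d(y,D) − d(x,D)} · (1 + O(σ)) as σ → 0⁺. -/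
open scoped Classical

/-- The marginal with its leading power of `σ / K` factored out. -/
noncomputable def gAux (K H : ℕ) (p : (Fin H → Fin K) → ℝ) (x : Fin H → Fin K) (σ : ℝ) : ℝ :=
  ∑ z : Fin H → Fin K, p z *
    ((1 - σ + σ / K) ^ (H - hammingDist x z) * (σ / K) ^ (hammingDist x z - distSupp K H p x))

lemma prod_aux (K H : ℕ) (σ : ℝ) (x z : Fin H → Fin K) :
    ∏ i : Fin H, ((1 - σ) * (if x i = z i then (1 : ℝ) else 0) + σ / K)
      = (1 - σ + σ / K) ^ (H - hammingDist x z) * (σ / K) ^ (hammingDist x z) := by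
  have h1 : ∀ i : Fin H, ((1 - σ) * (if x i = z i then (1 : ℝ) else 0) + σ / K)
      = if x i ≠ z i then σ / K else (1 - σ + σ / K) := by
    intro i
    by_cases h : x i = z i <;> simp [h]
  have hd : (Finset.univ.filter (fun i => x i ≠ z i)).card = hammingDist x z := by
    unfold hammingDist
    congr 1
  have hc : (Finset.univ.filter (fun i => ¬ (x i ≠ z i))).card = H - hammingDist x z := by
    have := Finset.card_filter_add_card_filter_not (s := (Finset.univ : Finset (Fin H)))
      (fun i => x i ≠ z i)
    rw [hd] at this
    simp only [Finset.card_univ, Fintype.card_fin] at this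
    omega
  rw [Finset.prod_congr rfl (fun i _ => h1 i), Finset.prod_ite, Finset.prod_const,
    Finset.prod_const, hd, hc, mul_comm]

lemma dist_le (K H : ℕ) (p : (Fin H → Fin K) → ℝ) (x z : Fin H → Fin K) (hz : p z ≠ 0) :
    distSupp K H p x ≤ hammingDist x z :=
  Nat.sInf_le ⟨z, hz, rfl⟩

lemma q_eq (K H : ℕ) (p : (Fin H → Fin K) → ℝ) (x : Fin H → Fin K) (σ : ℝ) :
    qUnif K H p σ x = (σ / K) ^ (distSupp K H p x) * gAux K H p x σ := by
  unfold qUnif gAux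
  rw [Finset.mul_sum]
  refine Finset.sum_congr rfl fun z _ => ?_
  by_cases hz : p z = 0
  · simp [hz]
  · rw [prod_aux, ← Nat.add_sub_of_le (dist_le K H p x z hz), pow_add]
    simp only [Nat.add_sub_cancel_left]
    ring

lemma g_zero (K H : ℕ) (p : (Fin H → Fin K) → ℝ) (x : Fin H → Fin K) :
    gAux K H p x 0 = projMass K H p x := by
  unfold gAux projMass
  rw [Finset.sum_filter]
  refine Finset.sum_congr rfl fun z _ => ?_
  by_cases hz : p z = 0
  · simp [hz]
  · have := dist_le K H p x z hz
    by_cases h : hammingDist x z = distSupp K H p x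
    · simp [hz, h]
    · have h2 : hammingDist x z - distSupp K H p x ≠ 0 := by omega
      simp [hz, h, h2]

lemma g_diff (K H : ℕ) (p : (Fin H → Fin K) → ℝ) (x : Fin H → Fin K) :
    Differentiable ℝ (gAux K H p x) := by
  unfold gAux
  fun_prop

lemma proj_pos (K H : ℕ) (p : (Fin H → Fin K) → ℝ) (hp0 : ∀ v, 0 ≤ p v) (hp1 : ∑ v, p v = 1)
    (x : Fin H → Fin K) : 0 < projMass K H p x := by
  have hne : ∃ z, p z ≠ 0 := by
    by_contra! h
    simp [h] at hp1
  obtain ⟨z, hz⟩ := hne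
  obtain ⟨w, hw, hd⟩ := Nat.sInf_mem (s := {n : ℕ | ∃ z : Fin H → Fin K, p z ≠ 0 ∧
    hammingDist x z = n}) ⟨_, z, hz, rfl⟩
  unfold projMass
  refine Finset.sum_pos (fun v hv => ?_) ⟨w, ?_⟩
  · exact lt_of_le_of_ne (hp0 v) (Finset.mem_filter.1 hv).2.1.symm
  · exact Finset.mem_filter.2 ⟨Finset.mem_univ _, hw, hd⟩

/-- Small-noise expansion of the concrete score ratio:
`|(q_σ(y)/q_σ(x)) (σ/K)^{d(x,D)−d(y,D)} − p(proj_D(y))/p(proj_D(x))| ≤ Cσ`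
for all small `σ`, i.e. `q_σ(y)/q_σ(x) = (p(proj_D(y))/p(proj_D(x))) (σ/K)^{d(y,D)−d(x,D)} (1+O(σ))`. -/
theorem concrete_score_small_noise_expansion
    (K H : ℕ) (hK : 2 ≤ K) (hH : 1 ≤ H)
    (p : (Fin H → Fin K) → ℝ) (hp0 : ∀ v, 0 ≤ p v) (hp1 : ∑ v, p v = 1)
    (x y : Fin H → Fin K) :
    ∃ C > (0 : ℝ), ∃ σ₀ ∈ Set.Ioo (0 : ℝ) 1, ∀ σ ∈ Set.Ioo (0 : ℝ) σ₀,
      |(qUnif K H p σ y / qUnif K H p σ x)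
          * (σ / K) ^ ((distSupp K H p x : ℤ) - (distSupp K H p y : ℤ))
        - projMass K H p y / projMass K H p x| ≤ C * σ := by
  have hx := proj_pos K H p hp0 hp1 x
  have hg : DifferentiableAt ℝ (fun σ => gAux K H p y σ / gAux K H p x σ) 0 :=
    ((g_diff K H p y) 0).div ((g_diff K H p x) 0) (by rw [g_zero]; exact hx.ne')
  obtain ⟨C, hC, hb⟩ := hg.isBigO_sub.exists_pos
  obtain ⟨ε, hε, hball⟩ := Metric.eventually_nhds_iff.1 hb.bound
  refine ⟨C, hC, min ε (1 / 2), ⟨by positivity, ?_⟩, ?_⟩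
  · exact lt_of_le_of_lt (min_le_right _ _) (by norm_num)
  · rintro σ ⟨h0, h1⟩
    have h2 := hball (y := σ) (by
      rw [Real.dist_eq, sub_zero, abs_of_pos h0]
      exact lt_of_lt_of_le h1 (min_le_left _ _))
    simp only [g_zero, sub_zero, Real.norm_eq_abs, abs_of_pos h0] at h2
    have hK0 : (0 : ℝ) < K := by
      have : 0 < K := by omega
      exact_mod_cast this
    have hs : σ / K ≠ 0 := (div_pos h0 hK0).ne'
    convert h2 using 3
    rw [q_eq, q_eq, zpow_sub₀ hs, zpow_natCast, zpow_natCast, mul_div_mul_comm]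
    have ha := pow_ne_zero (distSupp K H p x) hs
    have hb' := pow_ne_zero (distSupp K H p y) hs
    generalize (σ / K) ^ (distSupp K H p x) = a at *
    generalize (σ / K) ^ (distSupp K H p y) = b at *
    rw [mul_right_comm, div_mul_div_cancel₀ ha, div_self hb', one_mul]
end

section
/- Continuous-time limit of the normalized single-token uniform reverse probability (equation (eq:limit-cscore)). Fix σ ∈ (0,1) and suppose the noise-schedule assumption holds at σ. Then for every x ∈ X, every coordinate h ∈ {1,…,H}, and every token a ≠ x^h, with t = t_σ(T), one has lim_{T→∞} q^h_{t−1|t}(a | x) / (β^{(T)}_t / K) = q_σ(x^{h→a}) / q_σ(x). -/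
open scoped Classical
open Filter

/-- Cumulative noise level `σ^{(T)}_t = 1 − ∏_{s=1}^t (1 − β^{(T)}_s)`. -/
noncomputable def cumNoise (β : ℕ → ℕ → ℝ) (T t : ℕ) : ℝ :=
  1 - ∏ s ∈ Finset.Icc 1 t, (1 - β T s)

/-- One-step uniform forward kernel `q_{t|t−1}(y'|y)` with per-step rate `b`. -/
noncomputable def stepUnif (K H : ℕ) (b : ℝ) (y' y : Fin H → Fin K) : ℝ :=
  ∏ i : Fin H, ((1 - b) * (if y' i = y i then (1 : ℝ) else 0) + b / K)

/-- Exact single-token reverse probability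
`q^h_{t−1|t}(a|x) = Σ_{y : y^h = a} q_{t−1}(y) q_{t|t−1}(x|y) / q_t(x)`. -/
noncomputable def revUnif (K H : ℕ) (p : (Fin H → Fin K) → ℝ) (β : ℕ → ℕ → ℝ)
    (T t : ℕ) (h : Fin H) (a : Fin K) (x : Fin H → Fin K) : ℝ :=
  (∑ y ∈ Finset.univ.filter (fun y : Fin H → Fin K => y h = a),
      qUnif K H p (cumNoise β T (t - 1)) y * stepUnif K H (β T t) x y)
    / qUnif K H p (cumNoise β T t) x

lemma qUnif_continuous (K H : ℕ) (p : (Fin H → Fin K) → ℝ) (x : Fin H → Fin K) :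
    Continuous (fun s => qUnif K H p s x) := by
  unfold qUnif
  fun_prop

lemma qUnif_pos (K H : ℕ) (hK : 2 ≤ K) (p : (Fin H → Fin K) → ℝ) (hp0 : ∀ v, 0 ≤ p v)
    (hp1 : ∑ v, p v = 1) (σ : ℝ) (hσ : σ ∈ Set.Ioo (0 : ℝ) 1) (x : Fin H → Fin K) :
    0 < qUnif K H p σ x := by
  have hKr : (0 : ℝ) < K := by
    have : 0 < K := by omega
    exact_mod_cast this
  have hprod : ∀ x0 : Fin H → Fin K,
      0 < ∏ i : Fin H, ((1 - σ) * (if x i = x0 i then (1 : ℝ) else 0) + σ / K) := by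
    intro x0
    apply Finset.prod_pos
    intro i _
    have h1 : 0 < σ / K := div_pos hσ.1 hKr
    have h2 : 0 < 1 - σ := by linarith [hσ.2]
    split_ifs <;> simp <;> linarith
  unfold qUnif
  obtain ⟨v, hv⟩ : ∃ v, p v ≠ 0 := by
    by_contra hcon
    push Not at hcon
    simp [hcon] at hp1
  apply Finset.sum_pos'
  · intro i _
    exact mul_nonneg (hp0 i) (hprod i).le
  · exact ⟨v, Finset.mem_univ _, mul_pos (lt_of_le_of_ne (hp0 v) hv.symm) (hprod v)⟩

lemma cumNoise_pred (β : ℕ → ℕ → ℝ) (T t : ℕ) (ht : 1 ≤ t) (hb : β T t < 1) :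
    cumNoise β T (t - 1) = 1 - (1 - cumNoise β T t) / (1 - β T t) := by
  obtain ⟨n, rfl⟩ : ∃ n, t = n + 1 := ⟨t - 1, by omega⟩
  unfold cumNoise
  rw [Finset.prod_Icc_succ_top (by omega)]
  have : 1 - β T (n + 1) ≠ 0 := by linarith
  simp only [Nat.add_sub_cancel]
  field_simp
  ring

lemma stepUnif_split (K H : ℕ) (b : ℝ) (x y : Fin H → Fin K) (h : Fin H) (hne : x h ≠ y h) :
    stepUnif K H b x y = (b / K) *
      ∏ i ∈ Finset.univ.erase h, ((1 - b) * (if x i = y i then (1 : ℝ) else 0) + b / K) := by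
  unfold stepUnif
  rw [← Finset.mul_prod_erase _ _ (Finset.mem_univ h)]
  simp [hne]

/-- Continuous-time limit of the normalized single-token uniform reverse probability:
under the noise-schedule assumption at `σ`, with `t = t_σ(T)`,
`q^h_{t−1|t}(a|x)/(β^{(T)}_t/K) → q_σ(x^{h→a})/q_σ(x)` as `T → ∞`. -/
theorem uniform_reverse_normalized_limit
    (K H : ℕ) (hK : 2 ≤ K) (hH : 1 ≤ H)
    (p : (Fin H → Fin K) → ℝ) (hp0 : ∀ v, 0 ≤ p v) (hp1 : ∑ v, p v = 1)
    (β : ℕ → ℕ → ℝ) (hβ : ∀ T, ∀ t ∈ Finset.Icc 1 T, β T t ∈ Set.Ioo (0 : ℝ) 1)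
    (σ : ℝ) (hσ : σ ∈ Set.Ioo (0 : ℝ) 1)
    (tsel : ℕ → ℕ)
    (htsel : ∀ T, 1 ≤ T → tsel T ∈ Finset.Icc 1 T ∧
      ∀ s ∈ Finset.Icc 1 T, |cumNoise β T (tsel T) - σ| ≤ |cumNoise β T s - σ|)
    (hsched1 : Tendsto (fun T => cumNoise β T (tsel T)) atTop (nhds σ))
    (hsched2 : Tendsto (fun T => β T (tsel T)) atTop (nhds 0))
    (x : Fin H → Fin K) (h : Fin H) (a : Fin K) (ha : a ≠ x h) :
    Tendsto (fun T => revUnif K H p β T (tsel T) h a x / (β T (tsel T) / K)) atTop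
      (nhds (qUnif K H p σ (Function.update x h a) / qUnif K H p σ x)) := by
  have hKr : (K : ℝ) ≠ 0 := by
    have : K ≠ 0 := by omega
    exact_mod_cast this
  have hprev : Tendsto (fun T => cumNoise β T (tsel T - 1)) atTop (nhds σ) := by
    have h1 : Tendsto (fun T => 1 - (1 - cumNoise β T (tsel T)) / (1 - β T (tsel T))) atTop
        (nhds (1 - (1 - σ) / (1 - 0))) :=
      ((hsched1.const_sub 1).div (hsched2.const_sub 1) (by norm_num)).const_sub 1
    have h2 : 1 - (1 - σ) / (1 - 0) = σ := by ring
    rw [h2] at h1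
    refine h1.congr' ?_
    filter_upwards [eventually_ge_atTop 1] with T hT
    have hm := (htsel T hT).1
    exact (cumNoise_pred β T _ (Finset.mem_Icc.1 hm).1 (hβ T _ hm).2).symm
  have hnum : Tendsto (fun T => ∑ y ∈ Finset.univ.filter (fun y : Fin H → Fin K => y h = a),
      qUnif K H p (cumNoise β T (tsel T - 1)) y *
        ∏ i ∈ Finset.univ.erase h, ((1 - β T (tsel T)) * (if x i = y i then (1 : ℝ) else 0)
          + β T (tsel T) / K)) atTop
      (nhds (∑ y ∈ Finset.univ.filter (fun y : Fin H → Fin K => y h = a),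
        qUnif K H p σ y *
        ∏ i ∈ Finset.univ.erase h, ((1 - 0) * (if x i = y i then (1 : ℝ) else 0) + 0 / K))) := by
    refine tendsto_finsetSum _ fun y _ => ?_
    refine (((qUnif_continuous K H p y).tendsto σ).comp hprev).mul ?_
    refine tendsto_finsetProd _ fun i _ => ?_
    exact ((hsched2.const_sub 1).mul_const _).add (hsched2.div_const _)
  have hlim : (∑ y ∈ Finset.univ.filter (fun y : Fin H → Fin K => y h = a),
        qUnif K H p σ y *
        ∏ i ∈ Finset.univ.erase h, ((1 - 0) * (if x i = y i then (1 : ℝ) else 0) + 0 / (K : ℝ)))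
      = qUnif K H p σ (Function.update x h a) := by
    rw [Finset.sum_eq_single (Function.update x h a)]
    · rw [Finset.prod_eq_one, mul_one]
      intro i hi
      simp [Function.update_of_ne (Finset.ne_of_mem_erase hi)]
    · intro y hy hne
      have hya : y h = a := (Finset.mem_filter.1 hy).2
      obtain ⟨i, hi⟩ := Function.ne_iff.1 hne
      have hih : i ≠ h := by
        rintro rfl
        simp [hya] at hi
      rw [Function.update_of_ne hih] at hi
      rw [Finset.prod_eq_zero (Finset.mem_erase.2 ⟨hih, Finset.mem_univ i⟩), mul_zero]
      simp [Ne.symm hi]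
    · intro hn
      simp at hn
  rw [hlim] at hnum
  have hden := ((qUnif_continuous K H p x).tendsto σ).comp hsched1
  refine (hnum.div hden (qUnif_pos K H hK p hp0 hp1 σ hσ x).ne').congr' ?_
  filter_upwards [eventually_ge_atTop 1] with T hT
  have hm := (htsel T hT).1
  have hb : β T (tsel T) ≠ 0 := (hβ T _ hm).1.ne'
  have hbK : β T (tsel T) / K ≠ 0 := div_ne_zero hb hKr
  unfold revUnif
  have hs : (∑ y ∈ Finset.univ.filter (fun y : Fin H → Fin K => y h = a),
      qUnif K H p (cumNoise β T (tsel T - 1)) y * stepUnif K H (β T (tsel T)) x y)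
      = (β T (tsel T) / K) * ∑ y ∈ Finset.univ.filter (fun y : Fin H → Fin K => y h = a),
      qUnif K H p (cumNoise β T (tsel T - 1)) y *
        ∏ i ∈ Finset.univ.erase h, ((1 - β T (tsel T)) * (if x i = y i then (1 : ℝ) else 0)
          + β T (tsel T) / K) := by
    rw [Finset.mul_sum]
    refine Finset.sum_congr rfl fun y hy => ?_
    have hya : y h = a := (Finset.mem_filter.1 hy).2
    rw [stepUnif_split K H _ x y h (by rw [hya]; exact ha.symm)]
    ring
  rw [hs, div_right_comm, mul_div_cancel_left₀ _ hbK]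
  rfl
end

section
/- Theorem 2.2 (Rate separation for absorbing diffusion). Suppose the noise-schedule assumption holds at every σ ∈ (0,1). Fix x ∈ X̄ compatible with D, a coordinate h with x^h = m, a clean token a ∈ Fin K, and set z = x^{h→a} and ρ = p_data(proj_D(z))/p_data(proj_D(x)). For each σ ∈ (0,1), with t = t_σ(T), the limit L(σ) := lim_{T→∞} q̄^h_{t−1|t}(a | x)/β^{(T)}_t exists. Moreover: (i) if d(z,D) < d(x,D) (support-improving unmasking) then there exist C > 0 and σ₀ ∈ (0,1) such that |L(σ) − σ^{−1}·ρ| ≤ C for all σ ∈ (0,σ₀); (ii) if d(z,D) = d(x,D) (non-improving) then L(σ) = 0 for every σ ∈ (0,1). -/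
open scoped Classical
open Filter

/-- One-step absorbing forward kernel with per-step rate `b`. -/
noncomputable def stepAbs (K H : ℕ) (b : ℝ) (y' y : Fin H → Option (Fin K)) : ℝ :=
  ∏ i : Fin H, ((1 - b) * (if y' i = y i then (1 : ℝ) else 0)
    + b * (if y' i = none then (1 : ℝ) else 0))

/-- Exact single-token absorbing reverse probability `q̄^h_{t−1|t}(a|x)`. -/
noncomputable def revAbs (K H : ℕ) (p : (Fin H → Fin K) → ℝ) (β : ℕ → ℕ → ℝ)
    (T t : ℕ) (h : Fin H) (a : Fin K) (x : Fin H → Option (Fin K)) : ℝ :=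
  (∑ y ∈ Finset.univ.filter (fun y : Fin H → Option (Fin K) => y h = some a),
      qAbs K H p (cumNoise β T (t - 1)) y * stepAbs K H (β T t) x y)
    / qAbs K H p (cumNoise β T t) x

/-- `w` agrees with `x` off the masks. -/
def AgreeAbs {K H : ℕ} (x : Fin H → Option (Fin K)) (w : Fin H → Fin K) : Prop :=
  ∀ i : Fin H, x i ≠ none → x i = some (w i)

/-- Number of masks. -/
noncomputable def maskAbs {K H : ℕ} (x : Fin H → Option (Fin K)) : ℕ :=
  (Finset.univ.filter (fun i => x i = none)).card

/-- Mass of agreeing strings. -/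
noncomputable def massAbs {K H : ℕ} (p : (Fin H → Fin K) → ℝ)
    (x : Fin H → Option (Fin K)) : ℝ :=
  ∑ w : Fin H → Fin K, if AgreeAbs x w then p w else 0

lemma hamming_eq_abs {K H : ℕ} (x : Fin H → Option (Fin K)) (w : Fin H → Fin K) :
    hammingDist x (fun i => (some (w i) : Option (Fin K))) =
      (Finset.univ.filter (fun i => x i ≠ some (w i))).card := by
  unfold hammingDist
  congr 1

lemma mask_le_abs {K H : ℕ} (x : Fin H → Option (Fin K)) (w : Fin H → Fin K) :
    maskAbs x ≤ hammingDist x (fun i => (some (w i) : Option (Fin K))) := by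
  rw [hamming_eq_abs]
  apply Finset.card_le_card
  intro i hi
  simp only [Finset.mem_filter, Finset.mem_univ, true_and] at hi ⊢
  simp [hi]

lemma agree_iff_abs {K H : ℕ} (x : Fin H → Option (Fin K)) (w : Fin H → Fin K) :
    hammingDist x (fun i => (some (w i) : Option (Fin K))) = maskAbs x ↔ AgreeAbs x w := by
  rw [hamming_eq_abs]
  unfold maskAbs
  have hsub : Finset.univ.filter (fun i => x i = none) ⊆
      Finset.univ.filter (fun i => x i ≠ some (w i)) := by
    intro i hi
    simp only [Finset.mem_filter, Finset.mem_univ, true_and] at hi ⊢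
    simp [hi]
  constructor
  · intro hc i hi
    have := Finset.eq_of_subset_of_card_le hsub hc.le
    by_contra hne
    have h2 : i ∈ Finset.univ.filter (fun i => x i ≠ some (w i)) := by simp [hne]
    rw [← this] at h2
    simp at h2
    exact hi h2
  · intro hA
    congr 1
    apply Finset.Subset.antisymm _ hsub
    intro i hi
    simp only [Finset.mem_filter, Finset.mem_univ, true_and] at hi ⊢
    by_contra hne
    exact hi (hA i hne)

lemma dist_of_compat {K H : ℕ} (p : (Fin H → Fin K) → ℝ) (x : Fin H → Option (Fin K))
    (hx : CompatAbs K H p x) : distSuppAbs K H p x = maskAbs x := by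
  obtain ⟨w, hw, hA⟩ := hx
  apply le_antisymm
  · exact Nat.sInf_le ⟨w, hw, (agree_iff_abs x w).2 hA⟩
  · have hne : {n : ℕ | ∃ z : Fin H → Fin K, p z ≠ 0 ∧
        hammingDist x (fun i => (some (z i) : Option (Fin K))) = n}.Nonempty := ⟨_, w, hw, rfl⟩
    obtain ⟨z, _, hz⟩ := Nat.sInf_mem hne
    unfold distSuppAbs
    rw [← hz]
    exact mask_le_abs x z

lemma dist_of_not_compat {K H : ℕ} (p : (Fin H → Fin K) → ℝ) (x : Fin H → Option (Fin K))
    (hp : ∃ w, p w ≠ 0)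
    (hx : ¬ CompatAbs K H p x) : maskAbs x < distSuppAbs K H p x := by
  obtain ⟨w, hw⟩ := hp
  have hne : {n : ℕ | ∃ z : Fin H → Fin K, p z ≠ 0 ∧
      hammingDist x (fun i => (some (z i) : Option (Fin K))) = n}.Nonempty := ⟨_, w, hw, rfl⟩
  obtain ⟨z, hpz, hz⟩ := Nat.sInf_mem hne
  unfold distSuppAbs
  rw [← hz]
  refine lt_of_le_of_ne (mask_le_abs x z) ?_
  intro he
  exact hx ⟨z, hpz, (agree_iff_abs x z).1 he.symm⟩

lemma projMass_of_compat {K H : ℕ} (p : (Fin H → Fin K) → ℝ) (x : Fin H → Option (Fin K))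
    (hx : CompatAbs K H p x) : projMassAbs K H p x = massAbs p x := by
  unfold projMassAbs massAbs
  rw [Finset.sum_filter, dist_of_compat p x hx]
  apply Finset.sum_congr rfl
  intro w _
  have hA := agree_iff_abs x w
  by_cases h1 : p w = 0 <;> simp [h1, hA]

lemma mass_of_not_compat {K H : ℕ} (p : (Fin H → Fin K) → ℝ) (x : Fin H → Option (Fin K))
    (hx : ¬ CompatAbs K H p x) : massAbs p x = 0 := by
  unfold massAbs
  apply Finset.sum_eq_zero
  intro w _
  split_ifs with hA
  · by_contra hne
    exact hx ⟨w, hne, hA⟩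
  · rfl

lemma mass_pos_abs {K H : ℕ} (p : (Fin H → Fin K) → ℝ) (hp0 : ∀ v, 0 ≤ p v)
    (x : Fin H → Option (Fin K))
    (hx : CompatAbs K H p x) : 0 < massAbs p x := by
  obtain ⟨w, hw, hA⟩ := hx
  unfold massAbs
  apply Finset.sum_pos'
  · intro v _
    split_ifs
    · exact hp0 v
    · exact le_rfl
  · refine ⟨w, Finset.mem_univ _, ?_⟩
    have hA' : AgreeAbs x w := hA
    rw [if_pos hA']
    exact lt_of_le_of_ne (hp0 w) (Ne.symm hw)

lemma qAbs_eq {K H : ℕ} (p : (Fin H → Fin K) → ℝ) (s : ℝ) (x : Fin H → Option (Fin K)) :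
    qAbs K H p s x = s ^ maskAbs x *
      (1 - s) ^ (Finset.univ.filter (fun i => ¬ x i = none)).card * massAbs p x := by
  unfold qAbs massAbs
  rw [Finset.mul_sum]
  apply Finset.sum_congr rfl
  intro w _
  split_ifs with hA
  · have : ∀ i ∈ (Finset.univ : Finset (Fin H)),
        ((1 - s) * (if x i = some (w i) then (1 : ℝ) else 0)
          + s * (if x i = none then (1 : ℝ) else 0)) = if x i = none then s else 1 - s := by
      intro i _
      by_cases hi : x i = none
      · simp [hi]
      · have := hA i hi
        simp [this]
    rw [Finset.prod_congr rfl this, Finset.prod_ite, Finset.prod_const, Finset.prod_const]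
    unfold maskAbs
    ring
  · unfold AgreeAbs at hA
    push Not at hA
    obtain ⟨i, hi, hi2⟩ := hA
    rw [Finset.prod_eq_zero (Finset.mem_univ i)]
    · simp
    · simp [hi, hi2]

lemma num_eq {K H : ℕ} (p : (Fin H → Fin K) → ℝ) (s s' b : ℝ)
    (hs : 1 - s = (1 - s') * (1 - b))
    (x : Fin H → Option (Fin K)) (h : Fin H) (hm : x h = none) (a : Fin K) :
    (1 - b) * (∑ y ∈ Finset.univ.filter (fun y : Fin H → Option (Fin K) => y h = some a),
      qAbs K H p s' y * stepAbs K H b x y) = b * qAbs K H p s (Function.update x h (some a)) := by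
  have hset : Finset.univ.filter (fun y : Fin H → Option (Fin K) => y h = some a) =
      Fintype.piFinset (fun i : Fin H =>
        if i = h then ({some a} : Finset (Option (Fin K))) else Finset.univ) := by
    ext y
    simp only [Finset.mem_filter, Finset.mem_univ, true_and, Fintype.mem_piFinset]
    constructor
    · intro hy i
      by_cases hi : i = h
      · subst hi; simp [hy]
      · simp [hi]
    · intro hy
      simpa using hy h
  have hcomm : (∑ y ∈ Finset.univ.filter (fun y : Fin H → Option (Fin K) => y h = some a),
      qAbs K H p s' y * stepAbs K H b x y) =
      ∑ w : Fin H → Fin K, p w * ∏ i : Fin H,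
        ∑ c ∈ (if i = h then ({some a} : Finset (Option (Fin K))) else Finset.univ),
        ((1 - s') * (if c = some (w i) then (1 : ℝ) else 0)
          + s' * (if c = none then (1 : ℝ) else 0)) *
        ((1 - b) * (if x i = c then (1 : ℝ) else 0)
          + b * (if x i = none then (1 : ℝ) else 0)) := by
    rw [hset]
    simp_rw [Finset.prod_univ_sum, Finset.mul_sum]
    rw [Finset.sum_comm]
    apply Finset.sum_congr rfl
    intro y _
    unfold qAbs stepAbs
    rw [Finset.sum_mul]
    apply Finset.sum_congr rfl
    intro w _
    rw [Finset.prod_mul_distrib]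
    ring
  rw [hcomm]
  unfold qAbs
  rw [Finset.mul_sum, Finset.mul_sum]
  apply Finset.sum_congr rfl
  intro w _
  rw [← Finset.mul_prod_erase _ _ (Finset.mem_univ h),
    ← Finset.mul_prod_erase _ _ (Finset.mem_univ h)]
  have hprod : ∏ i ∈ Finset.univ.erase h,
        ∑ c ∈ (if i = h then ({some a} : Finset (Option (Fin K))) else Finset.univ),
        ((1 - s') * (if c = some (w i) then (1 : ℝ) else 0)
          + s' * (if c = none then (1 : ℝ) else 0)) *
        ((1 - b) * (if x i = c then (1 : ℝ) else 0)
          + b * (if x i = none then (1 : ℝ) else 0)) =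
      ∏ i ∈ Finset.univ.erase h,
        ((1 - s) * (if Function.update x h (some a) i = some (w i) then (1 : ℝ) else 0)
        + s * (if Function.update x h (some a) i = none then (1 : ℝ) else 0)) := by
    apply Finset.prod_congr rfl
    intro i hi
    have hih : i ≠ h := Finset.ne_of_mem_erase hi
    rw [if_neg hih, Function.update_of_ne hih, Fintype.sum_option]
    have hsv : s = 1 - (1 - s') * (1 - b) := by linarith
    cases hxi : x i with
    | none =>
      simp [Finset.sum_add_distrib, add_mul, mul_add]
      rw [hsv]; ring
    | some c =>
      simp [hs]
  rw [hprod]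
  simp only [if_true, Finset.sum_singleton, Function.update_self, hm]
  simp only [reduceCtorEq, if_false, if_true, hs]
  ring

lemma mask_update_abs {K H : ℕ} (x : Fin H → Option (Fin K)) (h : Fin H) (hm : x h = none)
    (a : Fin K) : maskAbs x = maskAbs (Function.update x h (some a)) + 1 ∧
    (Finset.univ.filter (fun i => ¬ Function.update x h (some a) i = none)).card =
      (Finset.univ.filter (fun i => ¬ x i = none)).card + 1 := by
  unfold maskAbs
  constructor
  · rw [← Finset.card_insert_of_notMem (a := h) (by simp)]
    congr 1
    ext i
    by_cases hi : i = h
    · subst hi; simp [hm]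
    · simp [hi]
  · rw [← Finset.card_insert_of_notMem (a := h) (by simp [hm])]
    congr 1
    ext i
    by_cases hi : i = h
    · subst hi; simp
    · simp [hi]

lemma cumNoise_step (β : ℕ → ℕ → ℝ) (T t : ℕ) (ht : 1 ≤ t) :
    1 - cumNoise β T t = (1 - cumNoise β T (t - 1)) * (1 - β T t) := by
  obtain ⟨n, rfl⟩ := Nat.exists_eq_add_of_le' ht
  unfold cumNoise
  rw [Finset.prod_Icc_succ_top (by omega)]
  simp

/-- Theorem 2.2 (Rate separation for absorbing diffusion).  Under the noise-schedule
assumption at every `σ ∈ (0,1)`, for a masked coordinate `h` of a compatible state `x`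
and a clean token `a`, the limit `L(σ)` of `q̄^h_{t−1|t}(a|x)/β^{(T)}_t` exists;
if the unmasking is support-improving then `|L(σ) − σ⁻¹ ρ| ≤ C` for small `σ`, and
if it is non-improving then `L(σ) = 0` for every `σ ∈ (0,1)`. -/
theorem absorbing_rate_separation
    (K H : ℕ) (hK : 2 ≤ K) (hH : 1 ≤ H)
    (p : (Fin H → Fin K) → ℝ) (hp0 : ∀ v, 0 ≤ p v) (hp1 : ∑ v, p v = 1)
    (β : ℕ → ℕ → ℝ) (hβ : ∀ T, ∀ t ∈ Finset.Icc 1 T, β T t ∈ Set.Ioo (0 : ℝ) 1)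
    (tsel : ℝ → ℕ → ℕ)
    (htsel : ∀ σ ∈ Set.Ioo (0 : ℝ) 1, ∀ T, 1 ≤ T → tsel σ T ∈ Finset.Icc 1 T ∧
      ∀ s ∈ Finset.Icc 1 T, |cumNoise β T (tsel σ T) - σ| ≤ |cumNoise β T s - σ|)
    (hsched : ∀ σ ∈ Set.Ioo (0 : ℝ) 1,
      Tendsto (fun T => cumNoise β T (tsel σ T)) atTop (nhds σ) ∧
      Tendsto (fun T => β T (tsel σ T)) atTop (nhds 0))
    (x : Fin H → Option (Fin K)) (hx : CompatAbs K H p x)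
    (h : Fin H) (hm : x h = none) (a : Fin K) :
    ∃ L : ℝ → ℝ,
      (∀ σ ∈ Set.Ioo (0 : ℝ) 1,
        Tendsto (fun T => revAbs K H p β T (tsel σ T) h a x / β T (tsel σ T))
          atTop (nhds (L σ))) ∧
      (distSuppAbs K H p (Function.update x h (some a)) < distSuppAbs K H p x →
        ∃ C > (0 : ℝ), ∃ σ₀ ∈ Set.Ioo (0 : ℝ) 1, ∀ σ ∈ Set.Ioo (0 : ℝ) σ₀,
          |L σ - σ⁻¹ *
              (projMassAbs K H p (Function.update x h (some a)) / projMassAbs K H p x)|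
            ≤ C) ∧
      (distSuppAbs K H p (Function.update x h (some a)) = distSuppAbs K H p x →
        ∀ σ ∈ Set.Ioo (0 : ℝ) 1, L σ = 0) := by
  have hPx := mass_pos_abs p hp0 x hx
  have hex : ∃ w, p w ≠ 0 := by obtain ⟨w, hw, _⟩ := hx; exact ⟨w, hw⟩
  obtain ⟨hM, hN⟩ := mask_update_abs x h hm a
  have hdx := dist_of_compat p x hx
  refine ⟨fun σ => (1 - σ) / σ *
    (massAbs p (Function.update x h (some a)) / massAbs p x), ?_, ?_, ?_⟩
  · intro σ hσ
    obtain ⟨h1, h2⟩ := hsched σ hσ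
    have hlim : Tendsto (fun T => (1 - β T (tsel σ T))⁻¹ *
        ((1 - cumNoise β T (tsel σ T)) / cumNoise β T (tsel σ T) *
          (massAbs p (Function.update x h (some a)) / massAbs p x))) atTop
        (nhds ((1 - 0)⁻¹ * ((1 - σ) / σ *
          (massAbs p (Function.update x h (some a)) / massAbs p x)))) := by
      refine Tendsto.mul (Tendsto.inv₀ (tendsto_const_nhds.sub h2) (by norm_num)) ?_
      exact ((tendsto_const_nhds.sub h1).div h1 hσ.1.ne').mul tendsto_const_nhds
    rw [sub_zero, inv_one, one_mul] at hlim
    refine hlim.congr' ?_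
    filter_upwards [eventually_ge_atTop 1, h1.eventually (Ioo_mem_nhds hσ.1 hσ.2)] with T hT hs
    have ht := (htsel σ hσ T hT).1
    have hb := hβ T _ ht
    have hstep := cumNoise_step β T (tsel σ T) (Finset.mem_Icc.1 ht).1
    have hnum := num_eq p _ _ _ hstep x h hm a
    unfold revAbs
    rw [qAbs_eq p _ (Function.update x h (some a)), hN] at hnum
    rw [qAbs_eq p _ x, hM]
    generalize cumNoise β T (tsel σ T) = s at *
    generalize β T (tsel σ T) = b at *
    have hb0 : b ≠ 0 := hb.1.ne'
    have hb1 : 1 - b ≠ 0 := (sub_pos.2 hb.2).ne'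
    have hs0 : s ≠ 0 := hs.1.ne'
    have hs1 : 1 - s ≠ 0 := (sub_pos.2 hs.2).ne'
    have hP := hPx.ne'
    rw [mul_comm, ← eq_div_iff hb1] at hnum
    rw [hnum]
    field_simp
    ring
  · intro hlt
    have hz : CompatAbs K H p (Function.update x h (some a)) := by
      by_contra hn
      have := dist_of_not_compat p _ hex hn
      omega
    rw [projMass_of_compat p x hx, projMass_of_compat p _ hz]
    set ρ := massAbs p (Function.update x h (some a)) / massAbs p x
    refine ⟨|ρ| + 1, by positivity, 1 / 2, by norm_num, ?_⟩
    intro σ hσ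
    have h0 : σ ≠ 0 := hσ.1.ne'
    have : (1 - σ) / σ * ρ - σ⁻¹ * ρ = -ρ := by field_simp; ring
    simp only [this, abs_neg]
    linarith
  · intro heq σ _
    have hz : ¬ CompatAbs K H p (Function.update x h (some a)) := by
      intro hc
      have := dist_of_compat p _ hc
      omega
    simp [mass_of_not_compat p _ hz]
end

section
/- Scale bounds for the true limiting normalized scores (key estimate in the proof of Corollary 2.3). Fix x ∈ X and define, for σ ∈ (0,1), the true limiting normalized score S_q(h,a;σ) := q_σ(x^{h→a})/q_σ(x) for h ∈ {1,…,H} and tokens a ≠ x^h. Then there exist constants a_x > 0, A_x > 0, and σ₀ ∈ (0,1) such that for all σ ∈ (0,σ₀), all h, and all a ≠ x^h: if d(x^{h→a},D) < d(x,D) then S_q(h,a;σ) ≥ a_x·σ^{−1}, and if d(x^{h→a},D) ≥ d(x,D) then S_q(h,a;σ) ≤ A_x. -/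
theorem prod_ite_eq_pow_hammingDist (K H : ℕ) (σ : ℝ) (x z : Fin H → Fin K) :
    ∏ i : Fin H, (if x i = z i then (1 : ℝ) else σ) = σ ^ hammingDist x z := by
  rw [Finset.prod_ite]
  simp [hammingDist]

theorem qUnif_upper (K H : ℕ) (hK : 2 ≤ K)
    (p : (Fin H → Fin K) → ℝ) (hp0 : ∀ v, 0 ≤ p v) (hp1 : ∑ v, p v = 1)
    (σ : ℝ) (h0 : 0 < σ) (h1 : σ < 1) (y : Fin H → Fin K) :
    qUnif K H p σ y ≤ σ ^ distSupp K H p y := by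
  have hK1 : (1 : ℝ) ≤ K := by exact_mod_cast (by omega : 1 ≤ K)
  have hd : σ / K ≤ σ := div_le_self h0.le hK1
  have hd0 : 0 ≤ σ / K := by positivity
  unfold qUnif
  calc _ ≤ ∑ z, p z * σ ^ distSupp K H p y := by
        apply Finset.sum_le_sum
        intro z _
        by_cases hz : p z = 0
        · simp [hz]
        apply mul_le_mul_of_nonneg_left _ (hp0 z)
        calc _ ≤ ∏ i : Fin H, (if y i = z i then (1 : ℝ) else σ) := by
              apply Finset.prod_le_prod
              · intro i _
                split_ifs <;> linarith
              · intro i _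
                split_ifs <;> linarith
          _ = σ ^ hammingDist y z := prod_ite_eq_pow_hammingDist K H σ y z
          _ ≤ _ := by
              have hle : distSupp K H p y ≤ hammingDist y z := Nat.sInf_le ⟨z, hz, rfl⟩
              exact pow_le_pow_of_le_one h0.le h1.le hle
    _ = _ := by rw [← Finset.sum_mul, hp1, one_mul]

theorem qUnif_lower (K H : ℕ) (hK : 2 ≤ K)
    (p : (Fin H → Fin K) → ℝ) (hp0 : ∀ v, 0 ≤ p v) (hp1 : ∑ v, p v = 1) :
    ∃ c > (0 : ℝ), ∀ σ : ℝ, 0 < σ → σ < 1 / 2 → ∀ y : Fin H → Fin K,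
      c * σ ^ distSupp K H p y ≤ qUnif K H p σ y := by
  have hK1 : (1 : ℝ) ≤ K := by exact_mod_cast (by omega : 1 ≤ K)
  have hKpos : (0 : ℝ) < K := by linarith
  have hne : (Finset.univ.filter (fun v => p v ≠ 0)).Nonempty := by
    by_contra hcon
    rw [Finset.not_nonempty_iff_eq_empty, Finset.filter_eq_empty_iff] at hcon
    have : ∑ v, p v = 0 := Finset.sum_eq_zero (fun v hv => not_not.mp (hcon hv))
    linarith
  obtain ⟨w, hw, hmin⟩ := Finset.exists_min_image _ p hne
  simp only [Finset.mem_filter, Finset.mem_univ, true_and] at hw hmin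
  have hwpos : 0 < p w := lt_of_le_of_ne (hp0 w) (Ne.symm hw)
  refine ⟨p w * (1 / (2 * K)) ^ H, by positivity, ?_⟩
  intro σ h0 h1 y
  have hS : {n : ℕ | ∃ z : Fin H → Fin K, p z ≠ 0 ∧ hammingDist y z = n}.Nonempty :=
    ⟨_, w, hw, rfl⟩
  obtain ⟨z, hz, hzd⟩ := Nat.sInf_mem hS
  have hd0 : 0 ≤ σ / K := by positivity
  have hm : 1 / (2 * (K : ℝ)) ≤ 1 / 2 := by
    apply one_div_le_one_div_of_le <;> linarith
  have hm2 : 1 / (2 * (K : ℝ)) * σ ≤ σ / K := by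
    rw [show 1 / (2 * (K : ℝ)) * σ = (σ / K) / 2 by field_simp]
    linarith
  have hfac : ∀ v : Fin H → Fin K, ∀ i, 0 ≤ (1 - σ) * (if y i = v i then (1 : ℝ) else 0) + σ / K := by
    intro v i
    split_ifs <;> linarith
  have hprod : (1 / (2 * (K : ℝ))) ^ H * σ ^ hammingDist y z ≤
      ∏ i : Fin H, ((1 - σ) * (if y i = z i then (1 : ℝ) else 0) + σ / K) := by
    rw [← prod_ite_eq_pow_hammingDist]
    calc _ = ∏ i : Fin H, (1 / (2 * (K : ℝ)) * (if y i = z i then (1 : ℝ) else σ)) := by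
          rw [Finset.prod_mul_distrib]
          simp
      _ ≤ _ := by
          apply Finset.prod_le_prod
          · intro i _
            split_ifs <;> positivity
          · intro i _
            split_ifs <;> linarith
  have hds : distSupp K H p y = hammingDist y z := hzd.symm
  rw [hds, mul_assoc]
  calc _ ≤ p z * ∏ i : Fin H, ((1 - σ) * (if y i = z i then (1 : ℝ) else 0) + σ / K) :=
        mul_le_mul (hmin z hz) hprod (by positivity) (hp0 z)
    _ ≤ _ := by
        unfold qUnif
        exact Finset.single_le_sum
          (f := fun v => p v * ∏ i : Fin H, ((1 - σ) * (if y i = v i then (1 : ℝ) else 0) + σ / K))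
          (fun v _ => mul_nonneg (hp0 v) (Finset.prod_nonneg (fun i _ => hfac v i)))
          (Finset.mem_univ z)

/-- Scale bounds for the true limiting normalized scores
`S_q(h,a;σ) = q_σ(x^{h→a})/q_σ(x)`: there exist `a_x, A_x > 0` and `σ₀ ∈ (0,1)`
such that for all `σ ∈ (0,σ₀)`, support-improving edits have score at least
`a_x σ⁻¹` while all other edits have score at most `A_x`. -/
theorem true_score_scale_bounds
    (K H : ℕ) (hK : 2 ≤ K) (hH : 1 ≤ H)
    (p : (Fin H → Fin K) → ℝ) (hp0 : ∀ v, 0 ≤ p v) (hp1 : ∑ v, p v = 1)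
    (x : Fin H → Fin K) :
    ∃ ax > (0 : ℝ), ∃ Ax > (0 : ℝ), ∃ σ₀ ∈ Set.Ioo (0 : ℝ) 1,
      ∀ σ ∈ Set.Ioo (0 : ℝ) σ₀, ∀ h : Fin H, ∀ a : Fin K, a ≠ x h →
        (distSupp K H p (Function.update x h a) < distSupp K H p x →
          ax * σ⁻¹ ≤ qUnif K H p σ (Function.update x h a) / qUnif K H p σ x) ∧
        (distSupp K H p x ≤ distSupp K H p (Function.update x h a) →
          qUnif K H p σ (Function.update x h a) / qUnif K H p σ x ≤ Ax) := by
  obtain ⟨c, hc, hlow⟩ := qUnif_lower K H hK p hp0 hp1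
  refine ⟨c, hc, c⁻¹, by positivity, 1 / 2, by norm_num, ?_⟩
  rintro σ ⟨h0, h1⟩ h a _
  have hup := qUnif_upper K H hK p hp0 hp1 σ h0 (by linarith)
  have hlo := hlow σ h0 h1
  have hq : 0 < qUnif K H p σ x := lt_of_lt_of_le (by positivity) (hlo x)
  have hσ1 : σ ≤ 1 := by linarith
  constructor
  · intro hd
    rw [le_div_iff₀ hq]
    calc c * σ⁻¹ * qUnif K H p σ x
        ≤ c * σ⁻¹ * σ ^ (distSupp K H p (Function.update x h a) + 1) := by
          apply mul_le_mul_of_nonneg_left _ (by positivity)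
          exact (hup x).trans (pow_le_pow_of_le_one h0.le hσ1 hd)
      _ = c * σ ^ distSupp K H p (Function.update x h a) := by
          rw [pow_succ]
          field_simp
      _ ≤ _ := hlo _
  · intro hd
    rw [div_le_iff₀ hq, inv_mul_eq_div, le_div_iff₀ hc, mul_comm]
    refine le_trans ?_ (hlo x)
    apply mul_le_mul_of_nonneg_left _ hc.le
    exact (hup _).trans (pow_le_pow_of_le_one h0.le hσ1 hd)
end

section
/- Corollary 2.3 (Coarse score accuracy recovers support-improving edits). Fix x ∈ X and define the true limiting normalized scores S_q(h,a;σ) := q_σ(x^{h→a})/q_σ(x) for σ ∈ (0,1), h ∈ {1,…,H}, and tokens a ≠ x^h. Let S_p(h,a;σ) be any family of strictly positive real numbers (the learned scores), and define the distortion C_σ(x) := max_{h} max_{a ≠ x^h} max( S_p(h,a;σ)/S_q(h,a;σ), S_q(h,a;σ)/S_p(h,a;σ) ). If σ^{1/2}·C_σ(x) → 0 as σ → 0⁺, then there exists σ₀ ∈ (0,1) such that for all σ ∈ (0,σ₀), all h, and all a ≠ x^h: S_p(h,a;σ) > σ^{−1/2} if and only if d(x^{h→a},D) < d(x,D). In other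 words, thresholding the learned normalized scores at σ^{−1/2} exactly recovers the support-improving single-token edits. -/
open Filter

/-- True limiting normalized score `S_q(h,a;σ) = q_σ(x^{h→a})/q_σ(x)`. -/
noncomputable def trueScore (K H : ℕ) (p : (Fin H → Fin K) → ℝ)
    (x : Fin H → Fin K) (h : Fin H) (a : Fin K) (σ : ℝ) : ℝ :=
  qUnif K H p σ (Function.update x h a) / qUnif K H p σ x

lemma csp_dist_attained (K H : ℕ) (p : (Fin H → Fin K) → ℝ) (hp1 : ∑ v, p v = 1)
    (y : Fin H → Fin K) : ∃ z, p z ≠ 0 ∧ hammingDist y z = distSupp K H p y := by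
  have hne : {n : ℕ | ∃ z : Fin H → Fin K, p z ≠ 0 ∧ hammingDist y z = n}.Nonempty := by
    by_contra hcon
    have hz : ∀ z, p z = 0 := by
      intro z
      by_contra h
      exact hcon ⟨_, z, h, rfl⟩
    simp [hz] at hp1
  exact Nat.sInf_mem hne

lemma csp_prod_pow (K H : ℕ) (y z : Fin H → Fin K) (σ : ℝ) :
    ∏ i : Fin H, (if y i = z i then (1 : ℝ) else σ) = σ ^ hammingDist y z := by
  rw [Finset.prod_ite]
  simp [hammingDist]

lemma csp_upper (K H : ℕ) (hK : 2 ≤ K) (p : (Fin H → Fin K) → ℝ) (hp0 : ∀ v, 0 ≤ p v)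
    (hp1 : ∑ v, p v = 1) (y : Fin H → Fin K) (σ : ℝ) (h0 : 0 < σ) (h1 : σ < 1) :
    qUnif K H p σ y ≤ σ ^ distSupp K H p y := by
  have hK1 : (1 : ℝ) ≤ K := by exact_mod_cast (by omega : 1 ≤ K)
  have hd : σ / K ≤ σ := div_le_self h0.le hK1
  have hd0 : 0 < σ / K := by positivity
  calc qUnif K H p σ y ≤ ∑ v, p v * σ ^ distSupp K H p y := by
        unfold qUnif
        refine Finset.sum_le_sum fun v _ => ?_
        by_cases hv : p v = 0
        · simp [hv]
        refine mul_le_mul_of_nonneg_left ?_ (hp0 v)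
        calc _ ≤ ∏ i : Fin H, (if y i = v i then (1 : ℝ) else σ) := by
              refine Finset.prod_le_prod (fun i _ => ?_) (fun i _ => ?_)
              · split_ifs <;> linarith
              · split_ifs <;> linarith
          _ = σ ^ hammingDist y v := csp_prod_pow K H y v σ
          _ ≤ _ := by
              refine pow_le_pow_of_le_one h0.le h1.le ?_
              exact Nat.sInf_le ⟨v, hv, rfl⟩
    _ = _ := by rw [← Finset.sum_mul, hp1, one_mul]

lemma csp_lower (K H : ℕ) (hK : 2 ≤ K) (p : (Fin H → Fin K) → ℝ) (hp0 : ∀ v, 0 ≤ p v)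
    (hp1 : ∑ v, p v = 1) (y : Fin H → Fin K) :
    ∃ A : ℝ, 0 < A ∧ ∀ σ : ℝ, 0 < σ → σ < 1 →
      A * σ ^ distSupp K H p y ≤ qUnif K H p σ y := by
  obtain ⟨z, hz, hzd⟩ := csp_dist_attained K H p hp1 y
  have hK0 : (0 : ℝ) < K := by exact_mod_cast (by omega : 0 < K)
  have hK1 : (1 : ℝ) ≤ K := by exact_mod_cast (by omega : 1 ≤ K)
  have hi : (1 : ℝ) / K ≤ 1 := by rw [div_le_one hK0]; exact hK1
  have hi0 : (0 : ℝ) < 1 / K := by positivity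
  refine ⟨p z * (1 / K) ^ H, mul_pos (lt_of_le_of_ne (hp0 z) (Ne.symm hz)) (by positivity), ?_⟩
  intro σ h0 h1
  have hs : σ / K = σ * (1 / K) := by ring
  have key : (1 / (K : ℝ)) ^ H * σ ^ hammingDist y z ≤
      ∏ i : Fin H, ((1 - σ) * (if y i = z i then (1 : ℝ) else 0) + σ / K) := by
    rw [← csp_prod_pow]
    have : (1 / (K : ℝ)) ^ H = ∏ _i : Fin H, (1 / (K : ℝ)) := by simp
    rw [this, ← Finset.prod_mul_distrib]
    refine Finset.prod_le_prod (fun i _ => ?_) (fun i _ => ?_)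
    · split_ifs <;> positivity
    · rw [hs]
      split_ifs
      · nlinarith
      · linarith
  rw [← hzd, mul_assoc]
  refine (mul_le_mul_of_nonneg_left key (hp0 z)).trans ?_
  unfold qUnif
  refine Finset.single_le_sum (f := fun v => p v *
    ∏ i : Fin H, ((1 - σ) * (if y i = v i then (1 : ℝ) else 0) + σ / K)) ?_ (Finset.mem_univ z)
  intro v _
  refine mul_nonneg (hp0 v) (Finset.prod_nonneg fun i _ => ?_)
  have : 0 < σ / K := by positivity
  split_ifs <;> linarith

/-- Corollary 2.3 (Coarse score accuracy recovers support-improving edits).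
If the learned scores `S_p` are strictly positive and their multiplicative
distortion `C_σ(x)` (the maximum over `h` and `a ≠ x^h` of
`max(S_p/S_q, S_q/S_p)`) satisfies `σ^{1/2} C_σ(x) → 0` as `σ → 0⁺`, then
for all small `σ`, `S_p(h,a;σ) > σ^{−1/2}` iff the edit `x^{h→a}` is
support-improving. -/
theorem coarse_score_projection
    (K H : ℕ) (hK : 2 ≤ K) (hH : 1 ≤ H)
    (p : (Fin H → Fin K) → ℝ) (hp0 : ∀ v, 0 ≤ p v) (hp1 : ∑ v, p v = 1)
    (x : Fin H → Fin K)
    (Sp : Fin H → Fin K → ℝ → ℝ)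
    (hSp : ∀ (h : Fin H) (a : Fin K), a ≠ x h → ∀ σ ∈ Set.Ioo (0 : ℝ) 1, 0 < Sp h a σ)
    (Cdist : ℝ → ℝ)
    (hC : ∀ σ ∈ Set.Ioo (0 : ℝ) 1,
      IsGreatest {r : ℝ | ∃ (h : Fin H) (a : Fin K), a ≠ x h ∧
        (r = Sp h a σ / trueScore K H p x h a σ ∨
         r = trueScore K H p x h a σ / Sp h a σ)} (Cdist σ))
    (hlim : Tendsto (fun σ : ℝ => σ ^ ((1 : ℝ) / 2) * Cdist σ)
      (nhdsWithin 0 (Set.Ioi 0)) (nhds 0)) :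
    ∃ σ₀ ∈ Set.Ioo (0 : ℝ) 1, ∀ σ ∈ Set.Ioo (0 : ℝ) σ₀,
      ∀ (h : Fin H) (a : Fin K), a ≠ x h →
        (σ ^ (-(1 : ℝ) / 2) < Sp h a σ ↔
          distSupp K H p (Function.update x h a) < distSupp K H p x) := by
  have main : ∀ (h : Fin H) (a : Fin K), ∀ᶠ σ in nhdsWithin (0 : ℝ) (Set.Ioi 0), a ≠ x h →
        (σ ^ (-(1 : ℝ) / 2) < Sp h a σ ↔
          distSupp K H p (Function.update x h a) < distSupp K H p x) := by
    intro h a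
    obtain ⟨A, hA, hAl⟩ := csp_lower K H hK p hp0 hp1 x
    obtain ⟨B, hB, hBl⟩ := csp_lower K H hK p hp0 hp1 (Function.update x h a)
    have e1 := hlim.eventually (gt_mem_nhds hA)
    have e2 := hlim.eventually (gt_mem_nhds hB)
    have e3 : ∀ᶠ σ in nhdsWithin (0 : ℝ) (Set.Ioi 0), σ ∈ Set.Ioo (0 : ℝ) 1 :=
      Ioo_mem_nhdsGT one_pos
    filter_upwards [e1, e2, e3] with σ h1 h2 h3 hax
    obtain ⟨h0, hlt⟩ := h3
    have hSpos := hSp h a hax σ ⟨h0, hlt⟩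
    have c1 := (hC σ ⟨h0, hlt⟩).2 ⟨h, a, hax, Or.inl rfl⟩
    have c2 := (hC σ ⟨h0, hlt⟩).2 ⟨h, a, hax, Or.inr rfl⟩
    have lx := hAl σ h0 hlt
    have ly := hBl σ h0 hlt
    have ux := csp_upper K H hK p hp0 hp1 x σ h0 hlt
    have uy := csp_upper K H hK p hp0 hp1 (Function.update x h a) σ h0 hlt
    have qx : 0 < qUnif K H p σ x := lt_of_lt_of_le (by positivity) lx
    have qy : 0 < qUnif K H p σ (Function.update x h a) := lt_of_lt_of_le (by positivity) ly
    have hSq : 0 < trueScore K H p x h a σ := div_pos qy qx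
    rw [div_le_iff₀ hSq] at c1
    rw [div_le_iff₀ hSpos] at c2
    have hCpos : 0 < Cdist σ := pos_of_mul_pos_left (hSq.trans_le c2) hSpos.le
    have hs : 0 < σ ^ ((1 : ℝ) / 2) := Real.rpow_pos_of_pos h0 _
    have hss : σ ^ ((1 : ℝ) / 2) * σ ^ ((1 : ℝ) / 2) = σ := by
      rw [← Real.rpow_add h0]; norm_num
    have hinv : σ ^ (-(1 : ℝ) / 2) = (σ ^ ((1 : ℝ) / 2))⁻¹ := by
      rw [← Real.rpow_neg h0.le]; norm_num
    rw [hinv]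
    generalize σ ^ ((1 : ℝ) / 2) = s at *
    generalize Sp h a σ = S at *
    constructor
    · intro hlt'
      by_contra hge
      push Not at hge
      have hle : trueScore K H p x h a σ ≤ 1 / A := by
        unfold trueScore
        rw [div_le_div_iff₀ qx hA]
        have := pow_le_pow_of_le_one h0.le hlt.le hge
        nlinarith
      have h5 : S ≤ Cdist σ * (1 / A) := c1.trans (mul_le_mul_of_nonneg_left hle hCpos.le)
      have h6 : Cdist σ * (1 / A) ≤ s⁻¹ := by
        rw [mul_one_div, inv_eq_one_div, div_le_div_iff₀ hA hs]
        linarith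
      linarith
    · intro hd
      have hle : B / σ ≤ trueScore K H p x h a σ := by
        unfold trueScore
        rw [div_le_div_iff₀ h0 qx]
        have h7 := pow_le_pow_of_le_one h0.le hlt.le (Nat.succ_le_of_lt hd)
        rw [Nat.succ_eq_add_one, pow_succ] at h7
        calc B * qUnif K H p σ x ≤ B * (σ ^ distSupp K H p (Function.update x h a) * σ) :=
              mul_le_mul_of_nonneg_left (ux.trans h7) hB.le
          _ = B * σ ^ distSupp K H p (Function.update x h a) * σ := by ring
          _ ≤ _ := mul_le_mul_of_nonneg_right ly h0.le
      have h8 := hle.trans c2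
      rw [div_le_iff₀ h0] at h8
      have h8' : Cdist σ * S * σ = s * Cdist σ * (S * s) := by
        generalize Cdist σ = c
        rw [← hss]; ring
      have h9 : s * Cdist σ * 1 < s * Cdist σ * (S * s) := by linarith
      have h10 := lt_of_mul_lt_mul_left h9 (by positivity)
      rw [inv_eq_one_div, div_lt_iff₀ hs]
      exact h10
  have hall := (eventually_all.2 fun h => eventually_all.2 fun a => main h a)
  rw [Filter.Eventually, mem_nhdsGT_iff_exists_Ioo_subset] at hall
  obtain ⟨u, hu, hsub⟩ := hall
  have hu0 : (0 : ℝ) < u := hu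
  refine ⟨min u (1 / 2), ⟨by positivity, lt_of_le_of_lt (min_le_right _ _) (by norm_num)⟩, ?_⟩
  intro σ hσ
  exact hsub ⟨hσ.1, hσ.2.trans_le (min_le_left _ _)⟩
end
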